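/- (KKL level-set consequence) Let A ⊆ {0,1}^n be nonempty with |A| ≥ 2^{n-c} for some c ≥ 1, and let f : {0,1}^n → {0,1} be its characteristic function. Then for every integer k with 1 ≤ k ≤ 4c, we have (2^{2n}/|A|²) · ∑_{v : |v| = k} f̂(v)² ≤ (4√2·c / k)^k. -/

import Mathlib

/-!
The proof goes by duality with Bonami's hypercontractive inequality for even exponents. Write `W`
for the Fourier weight of `f` on the levels `|v| ≤ k`, and `G` for the truncation of `f` to these
levels, so that `∑ x, f x * G x = 2 ^ n * W`. As `|f|` is at most the indicator of `A`, Hölder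
bounds this sum by `|A| ^ (1 - 1 / (2 * m))` times the `ℓ^(2 * m)` norm of `G`, and
hypercontractivity bounds that norm by `(2 ^ n) ^ (1 / (2 * m)) * √((2 * m - 1) ^ k * W)`.
Solving for `W` gives `(4 ^ n / |A| ^ 2 * W) ^ m ≤ 2 ^ n / |A| * ((2 * m - 1) ^ k) ^ m`.

Even exponents make hypercontractivity elementary: the two-point inequality compares binomial
coefficients, and Minkowski's inequality tensorizes it. The exponent is chosen with
`2 * m - 1 ≤ 4 * c / k ≤ 2 * m + 1`, so that `(2 ^ n / |A|) ^ (1 / m) ≤ 2 ^ (c / m)` is about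
`√2 ^ k`; Bernoulli's inequality shows that rounding `m` to an integer costs nothing.
-/

open Finset

open scoped Classical

noncomputable def boolFourier {n : ℕ} (f : (Fin n → ZMod 2) → ℝ) (s : Fin n → ZMod 2) : ℝ :=
  ((2 : ℝ) ^ n)⁻¹ * ∑ y : Fin n → ZMod 2, f y * (-1 : ℝ) ^ (∑ i, y i * s i : ZMod 2).val

lemma one_le_two_mul_sub_one {m : ℕ} (hm : 1 ≤ m) : (1 : ℝ) ≤ 2 * m - 1 := by
  have : (1 : ℝ) ≤ m := by exact_mod_cast hm
  linarith

section TwoPoint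

lemma sum_range_two_mul_add_one_of_odd_eq_zero {M : Type*} [AddCommMonoid M] {g : ℕ → M}
    (hg : ∀ j, g (2 * j + 1) = 0) (m : ℕ) :
    ∑ i ∈ range (2 * m + 1), g i = ∑ j ∈ range (m + 1), g (2 * j) := by
  induction m with
  | zero => simp
  | succ m ih =>
    rw [sum_range_succ _ (m + 1), ← ih, Nat.mul_succ, sum_range_succ, sum_range_succ, hg, add_zero]

lemma add_pow_add_sub_pow {R : Type*} [CommRing R] (a b : R) (m : ℕ) :
    (a + b) ^ (2 * m) + (a - b) ^ (2 * m) =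
      2 * ∑ j ∈ range (m + 1), (b ^ 2) ^ j * (a ^ 2) ^ (m - j) * (2 * m).choose (2 * j) := by
  rw [add_comm a b, show a - b = -b + a by ring, add_pow, add_pow, ← sum_add_distrib,
    sum_range_two_mul_add_one_of_odd_eq_zero, mul_sum]
  · refine sum_congr rfl fun j _ => ?_
    rw [← Nat.mul_sub, pow_mul, pow_mul, pow_mul, neg_sq]
    ring
  · intro j
    rw [Odd.neg_pow ⟨j, rfl⟩]
    ring

lemma choose_two_mul_succ_mul (j d : ℕ) :
    (2 * (j + 1 + d)).choose (2 * (j + 1)) * ((j + 1) * (2 * j + 1)) =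
      (2 * (j + 1 + d)).choose (2 * j) * ((d + 1) * (2 * d + 1)) := by
  have h_even := Nat.choose_succ_right_eq (2 * (j + 1 + d)) (2 * j)
  have h_odd := Nat.choose_succ_right_eq (2 * (j + 1 + d)) (2 * j + 1)
  rw [show 2 * (j + 1 + d) - 2 * j = 2 * d + 2 by omega] at h_even
  rw [show 2 * (j + 1 + d) - (2 * j + 1) = 2 * d + 1 by omega] at h_odd
  rw [Nat.mul_succ 2 j]
  linarith [congrArg (· * (2 * j + 1)) h_odd, congrArg (· * (2 * d + 1)) h_even]

lemma choose_two_mul_le (m j : ℕ) :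
    ((2 * m).choose (2 * j) : ℝ) ≤ m.choose j * (2 * m - 1) ^ j := by
  induction j with
  | zero => simp
  | succ j ih =>
    rcases Nat.lt_or_ge j m with hj | hj
    · obtain ⟨d, rfl⟩ := Nat.exists_eq_add_of_le (Nat.succ_le_of_lt hj)
      have h_two_mul : ((2 * (j + 1 + d)).choose (2 * (j + 1)) : ℝ) * ((j + 1) * (2 * j + 1)) =
          (2 * (j + 1 + d)).choose (2 * j) * ((d + 1) * (2 * d + 1)) := by
        exact_mod_cast choose_two_mul_succ_mul j d
      have h_succ : ((j + 1 + d).choose (j + 1) : ℝ) * (j + 1) =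
          (j + 1 + d).choose j * (d + 1) := by
        have h := Nat.choose_succ_right_eq (j + 1 + d) j
        rw [show j + 1 + d - j = d + 1 by omega] at h
        exact_mod_cast h
      set r : ℝ := 2 * ((j + 1 + d : ℕ) : ℝ) - 1 with hr
      have h_ratio : 2 * (d : ℝ) + 1 ≤ r * (2 * j + 1) := by
        have : (0 : ℝ) ≤ j * d := by positivity
        push_cast at hr
        nlinarith
      refine le_of_mul_le_mul_right ?_ (show (0 : ℝ) < (j + 1) * (2 * j + 1) by positivity)
      calc ((2 * (j + 1 + d)).choose (2 * (j + 1)) : ℝ) * ((j + 1) * (2 * j + 1))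
          = (2 * (j + 1 + d)).choose (2 * j) * ((d + 1) * (2 * d + 1)) := h_two_mul
        _ ≤ (j + 1 + d).choose j * r ^ j * ((d + 1) * (r * (2 * j + 1))) :=
          mul_le_mul ih (by gcongr) (by positivity) ((Nat.cast_nonneg _).trans ih)
        _ = (j + 1 + d).choose j * (d + 1) * (r ^ (j + 1) * (2 * j + 1)) := by ring
        _ = (j + 1 + d).choose (j + 1) * r ^ (j + 1) * ((j + 1) * (2 * j + 1)) := by
          rw [← h_succ]
          ring
    · rw [Nat.choose_eq_zero_of_lt (by omega), Nat.choose_eq_zero_of_lt (by omega)]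
      simp

/-- The one-coordinate case of Bonami's inequality. -/
lemma add_pow_add_sub_pow_le (m : ℕ) (a b : ℝ) :
    (a + b) ^ (2 * m) + (a - b) ^ (2 * m) ≤ 2 * (a ^ 2 + (2 * m - 1) * b ^ 2) ^ m := by
  rw [add_pow_add_sub_pow, add_comm (a ^ 2), add_pow]
  refine mul_le_mul_of_nonneg_left (sum_le_sum fun j _ => ?_) zero_le_two
  calc (b ^ 2) ^ j * (a ^ 2) ^ (m - j) * ((2 * m).choose (2 * j) : ℝ)
      ≤ (b ^ 2) ^ j * (a ^ 2) ^ (m - j) * (m.choose j * (2 * m - 1) ^ j) := by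
        gcongr
        exact choose_two_mul_le m j
    _ = ((2 * m - 1) * b ^ 2) ^ j * (a ^ 2) ^ (m - j) * m.choose j := by
        rw [mul_pow (2 * (m : ℝ) - 1)]
        ring

end TwoPoint

section PowerSums

variable {ι : Type*}

lemma sum_pow_le_mul_pow_iff {s : Finset ι} {X : ι → ℝ} (hX : ∀ i ∈ s, 0 ≤ X i) {m : ℕ}
    (hm : m ≠ 0) {N α : ℝ} (hN : 0 ≤ N) (hα : 0 ≤ α) :
    ∑ i ∈ s, X i ^ m ≤ N * α ^ m ↔
      (∑ i ∈ s, X i ^ m) ^ (m : ℝ)⁻¹ ≤ N ^ (m : ℝ)⁻¹ * α := by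
  have h_sum : 0 ≤ ∑ i ∈ s, X i ^ m := sum_nonneg fun i hi => pow_nonneg (hX i hi) m
  have h_root : N ^ (m : ℝ)⁻¹ * α = (N * α ^ m) ^ (m : ℝ)⁻¹ := by
    rw [Real.mul_rpow hN (by positivity), Real.pow_rpow_inv_natCast hα hm]
  rw [h_root, Real.rpow_le_rpow_iff h_sum (by positivity) (by positivity)]

/-- Minkowski's inequality, with the `m`-th roots cleared by comparing both norms with `N`. -/
lemma sum_add_pow_le_mul_add_pow {s : Finset ι} {X Y : ι → ℝ} (hX : ∀ i ∈ s, 0 ≤ X i)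
    (hY : ∀ i ∈ s, 0 ≤ Y i) {m : ℕ} (hm : 1 ≤ m) {N α β : ℝ} (hN : 0 ≤ N) (hα : 0 ≤ α)
    (hβ : 0 ≤ β) (hXα : ∑ i ∈ s, X i ^ m ≤ N * α ^ m) (hYβ : ∑ i ∈ s, Y i ^ m ≤ N * β ^ m) :
    ∑ i ∈ s, (X i + Y i) ^ m ≤ N * (α + β) ^ m := by
  have hm0 : m ≠ 0 := Nat.one_le_iff_ne_zero.mp hm
  have h_minkowski := Real.Lp_add_le_of_nonneg s (p := m) (by exact_mod_cast hm) hX hY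
  simp only [Real.rpow_natCast, one_div] at h_minkowski
  rw [sum_pow_le_mul_pow_iff hX hm0 hN hα] at hXα
  rw [sum_pow_le_mul_pow_iff hY hm0 hN hβ] at hYβ
  rw [sum_pow_le_mul_pow_iff (fun i hi => add_nonneg (hX i hi) (hY i hi)) hm0 hN
    (add_nonneg hα hβ), mul_add]
  exact h_minkowski.trans (add_le_add hXα hYβ)

/-- Hölder's inequality for the exponents `p / (p - 1)` and `p`; the extra factor `#A` on the left
avoids the exponent `p - 1`. -/
lemma card_mul_pow_sum_mul_le [Fintype ι] [DecidableEq ι] {A : Finset ι} {f : ι → ℝ}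
    (hf : ∀ x, |f x| ≤ if x ∈ A then 1 else 0) (G : ι → ℝ) {p : ℕ} (hp : Even p) (hp0 : p ≠ 0) :
    #A * (∑ x, f x * G x) ^ p ≤ (#A : ℝ) ^ p * ∑ x, G x ^ p := by
  have h_abs : |∑ x, f x * G x| ≤ ∑ x ∈ A, |G x| :=
    calc |∑ x, f x * G x| ≤ ∑ x, |f x| * |G x| := by
          simpa only [abs_mul] using abs_sum_le_sum_abs (fun x => f x * G x) univ
      _ ≤ ∑ x, (if x ∈ A then 1 else 0) * |G x| := by
          gcongr with x
          exact hf x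
      _ = ∑ x ∈ A, |G x| := by simp
  obtain ⟨l, rfl⟩ := Nat.exists_eq_succ_of_ne_zero hp0
  calc #A * (∑ x, f x * G x) ^ (l + 1) = #A * |∑ x, f x * G x| ^ (l + 1) := by rw [hp.pow_abs]
    _ ≤ #A * (∑ x ∈ A, |G x|) ^ (l + 1) := by gcongr
    _ ≤ #A * ((#A : ℝ) ^ l * ∑ x ∈ A, |G x| ^ (l + 1)) := by
        gcongr
        exact pow_sum_le_card_mul_sum_pow (fun x _ => abs_nonneg (G x)) l
    _ = (#A : ℝ) ^ (l + 1) * ∑ x ∈ A, G x ^ (l + 1) := by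
        simp only [hp.pow_abs]
        ring
    _ ≤ (#A : ℝ) ^ (l + 1) * ∑ x, G x ^ (l + 1) := by
        gcongr
        exacts [fun x _ _ => hp.pow_nonneg (G x), subset_univ A]

end PowerSums

section Cube

variable {n : ℕ}

/-- The character `x ↦ (-1)^{x·v}` of the Boolean cube. -/
noncomputable def boolChar (x v : Fin n → ZMod 2) : ℝ :=
  (-1 : ℝ) ^ (∑ i, x i * v i : ZMod 2).val

/-- The function on the Boolean cube with Fourier coefficients `g`; this inverts `boolFourier`. -/
noncomputable def boolFourierInv (g : (Fin n → ZMod 2) → ℝ) (x : Fin n → ZMod 2) : ℝ :=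
  ∑ v, g v * boolChar x v

/-- The sum `∑ r^|v| g(v)²`, which is the squared `L²` norm of `T g` for the noise operator `T` that
multiplies the `v`-th Fourier coefficient by `√r ^ |v|`. -/
noncomputable def noiseEnergy (r : ℝ) (g : (Fin n → ZMod 2) → ℝ) : ℝ :=
  ∑ v, r ^ hammingNorm v * g v ^ 2

/-- The Fourier weight of `f` on the levels `|v| ≤ k`. -/
noncomputable def lowDegreeWeight (f : (Fin n → ZMod 2) → ℝ) (k : ℕ) : ℝ :=
  ∑ v with hammingNorm v ≤ k, boolFourier f v ^ 2

lemma boolChar_cons (a b : ZMod 2) (x v : Fin n → ZMod 2) :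
    boolChar (Fin.cons a x : Fin (n + 1) → ZMod 2) (Fin.cons b v) =
      (-1) ^ (a * b).val * boolChar x v := by
  simp only [boolChar, Fin.sum_univ_succ, Fin.cons_zero, Fin.cons_succ]
  exact (AddChar.zmodChar 2 (neg_one_sq (R := ℝ))).map_add_eq_mul _ _

lemma hammingNorm_cons (b : ZMod 2) (v : Fin n → ZMod 2) :
    hammingNorm (Fin.cons b v : Fin (n + 1) → ZMod 2) = hammingNorm v + b.val := by
  have h_head : ∀ b : ZMod 2, (if b ≠ 0 then 1 else 0) = b.val := by decide
  simp only [hammingNorm, card_filter, Fin.sum_univ_succ, Fin.cons_zero, Fin.cons_succ, h_head]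
  exact add_comm _ _

lemma sum_cube_succ {M : Type*} [AddCommMonoid M] (g : (Fin (n + 1) → ZMod 2) → M) :
    ∑ x, g x = ∑ x : Fin n → ZMod 2, (g (Fin.cons 0 x) + g (Fin.cons 1 x)) := by
  rw [← (Fin.consEquiv fun _ => ZMod 2).sum_comp, Fintype.sum_prod_type_right]
  exact sum_congr rfl fun x _ => Fin.sum_univ_two _

lemma boolFourierInv_cons_zero (g : (Fin (n + 1) → ZMod 2) → ℝ) (x : Fin n → ZMod 2) :
    boolFourierInv g (Fin.cons 0 x) =
      boolFourierInv (fun v => g (Fin.cons 0 v)) x +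
        boolFourierInv (fun v => g (Fin.cons 1 v)) x := by
  simp [boolFourierInv, sum_cube_succ, sum_add_distrib, boolChar_cons]

lemma boolFourierInv_cons_one (g : (Fin (n + 1) → ZMod 2) → ℝ) (x : Fin n → ZMod 2) :
    boolFourierInv g (Fin.cons 1 x) =
      boolFourierInv (fun v => g (Fin.cons 0 v)) x -
        boolFourierInv (fun v => g (Fin.cons 1 v)) x := by
  simp [boolFourierInv, sum_cube_succ, sum_add_distrib, boolChar_cons, ZMod.val_one,
    sub_eq_add_neg]

lemma noiseEnergy_succ (r : ℝ) (g : (Fin (n + 1) → ZMod 2) → ℝ) :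
    noiseEnergy r g =
      noiseEnergy r (fun v => g (Fin.cons 0 v)) +
        r * noiseEnergy r (fun v => g (Fin.cons 1 v)) := by
  simp [noiseEnergy, sum_cube_succ, sum_add_distrib, hammingNorm_cons, ZMod.val_one, pow_succ',
    mul_sum, mul_assoc]

lemma noiseEnergy_nonneg {r : ℝ} (hr : 0 ≤ r) (g : (Fin n → ZMod 2) → ℝ) :
    0 ≤ noiseEnergy r g :=
  sum_nonneg fun _ _ => by positivity

lemma noiseEnergy_le_of_degree_le {r : ℝ} (hr : 1 ≤ r) {k : ℕ} {g : (Fin n → ZMod 2) → ℝ}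
    (hg : ∀ v, k < hammingNorm v → g v = 0) :
    noiseEnergy r g ≤ r ^ k * ∑ v, g v ^ 2 := by
  rw [noiseEnergy, mul_sum]
  refine sum_le_sum fun v _ => ?_
  rcases le_or_gt (hammingNorm v) k with hv | hv
  · gcongr
  · simp [hg v hv]

/-- Bonami's hypercontractive inequality from `L²` to `L^(2m)`. -/
theorem sum_boolFourierInv_pow_le {m : ℕ} (hm : 1 ≤ m) (g : (Fin n → ZMod 2) → ℝ) :
    ∑ x, boolFourierInv g x ^ (2 * m) ≤ 2 ^ n * noiseEnergy (2 * m - 1) g ^ m := by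
  induction n with
  | zero => simp [boolFourierInv, noiseEnergy, boolChar, hammingNorm, pow_mul]
  | succ n ih =>
    set g₀ : (Fin n → ZMod 2) → ℝ := fun v => g (Fin.cons 0 v)
    set g₁ : (Fin n → ZMod 2) → ℝ := fun v => g (Fin.cons 1 v)
    set r : ℝ := 2 * m - 1
    have hr : 0 ≤ r := zero_le_one.trans (one_le_two_mul_sub_one hm)
    have ih₀ : ∑ x, (boolFourierInv g₀ x ^ 2) ^ m ≤ 2 ^ n * noiseEnergy r g₀ ^ m := by
      simpa only [pow_mul] using ih g₀
    have ih₁ : ∑ x, (r * boolFourierInv g₁ x ^ 2) ^ m ≤ 2 ^ n * (r * noiseEnergy r g₁) ^ m := by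
      simp only [mul_pow r, ← mul_sum, mul_left_comm _ (r ^ m), ← pow_mul]
      exact mul_le_mul_of_nonneg_left (ih g₁) (by positivity)
    calc ∑ x, boolFourierInv g x ^ (2 * m)
        = ∑ x, ((boolFourierInv g₀ x + boolFourierInv g₁ x) ^ (2 * m) +
            (boolFourierInv g₀ x - boolFourierInv g₁ x) ^ (2 * m)) := by
          simp only [sum_cube_succ, boolFourierInv_cons_zero, boolFourierInv_cons_one, g₀, g₁]
      _ ≤ ∑ x, 2 * (boolFourierInv g₀ x ^ 2 + r * boolFourierInv g₁ x ^ 2) ^ m :=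
          sum_le_sum fun x _ => add_pow_add_sub_pow_le m _ _
      _ = 2 * ∑ x, (boolFourierInv g₀ x ^ 2 + r * boolFourierInv g₁ x ^ 2) ^ m := by rw [mul_sum]
      _ ≤ 2 * (2 ^ n * (noiseEnergy r g₀ + r * noiseEnergy r g₁) ^ m) := by
          gcongr
          exact sum_add_pow_le_mul_add_pow (fun _ _ => by positivity) (fun _ _ => by positivity) hm
            (by positivity) (noiseEnergy_nonneg hr g₀) (mul_nonneg hr (noiseEnergy_nonneg hr g₁))
            ih₀ ih₁
      _ = 2 ^ (n + 1) * noiseEnergy r g ^ m := by rw [noiseEnergy_succ, pow_succ', mul_assoc]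

lemma sum_boolFourierInv_pow_le_of_degree_le {m : ℕ} (hm : 1 ≤ m) {k : ℕ} {g : (Fin n → ZMod 2) → ℝ}
    (hg : ∀ v, k < hammingNorm v → g v = 0) :
    ∑ x, boolFourierInv g x ^ (2 * m) ≤ 2 ^ n * ((2 * m - 1) ^ k * ∑ v, g v ^ 2) ^ m := by
  have hr := one_le_two_mul_sub_one hm
  refine (sum_boolFourierInv_pow_le hm g).trans ?_
  gcongr
  exacts [noiseEnergy_nonneg (by linarith) g, noiseEnergy_le_of_degree_le hr hg]

lemma sum_mul_boolFourierInv (f g : (Fin n → ZMod 2) → ℝ) :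
    ∑ x, f x * boolFourierInv g x = 2 ^ n * ∑ v, boolFourier f v * g v := by
  have h_coeff : ∀ v, 2 ^ n * boolFourier f v = ∑ x, f x * boolChar x v := fun v =>
    mul_inv_cancel_left₀ (by positivity) _
  simp only [boolFourierInv, mul_sum, ← mul_assoc, h_coeff, sum_mul]
  rw [sum_comm]
  exact sum_congr rfl fun v _ => sum_congr rfl fun x _ => mul_right_comm _ _ _

lemma lowDegreeWeight_nonneg (f : (Fin n → ZMod 2) → ℝ) (k : ℕ) : 0 ≤ lowDegreeWeight f k :=
  sum_nonneg fun _ _ => sq_nonneg _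

lemma sum_level_sq_boolFourier_le_lowDegreeWeight (f : (Fin n → ZMod 2) → ℝ) (k : ℕ) :
    ∑ v with hammingNorm v = k, boolFourier f v ^ 2 ≤ lowDegreeWeight f k :=
  sum_le_sum_of_subset_of_nonneg (monotone_filter_right _ fun _ _ h => h.le)
    fun _ _ _ => sq_nonneg _

section Bounded

variable {A : Finset (Fin n → ZMod 2)} {f : (Fin n → ZMod 2) → ℝ}

lemma card_mul_lowDegreeWeight_pow_le (hf : ∀ x, |f x| ≤ if x ∈ A then 1 else 0) (k : ℕ) {m : ℕ}
    (hm : 1 ≤ m) :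
    #A * (2 ^ n * lowDegreeWeight f k) ^ (2 * m) ≤
      (#A : ℝ) ^ (2 * m) * (2 ^ n * ((2 * m - 1) ^ k * lowDegreeWeight f k) ^ m) := by
  set g : (Fin n → ZMod 2) → ℝ := fun v => if hammingNorm v ≤ k then boolFourier f v else 0
  have hg : ∀ v, k < hammingNorm v → g v = 0 := fun v hv => if_neg hv.not_ge
  have h_inner : ∑ v, boolFourier f v * g v = lowDegreeWeight f k := by
    simp only [g, lowDegreeWeight, sum_filter, mul_ite, mul_zero, sq]
  have h_sq : ∑ v, g v ^ 2 = lowDegreeWeight f k := by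
    simp only [g, lowDegreeWeight, sum_filter, ite_pow, zero_pow two_ne_zero]
  calc #A * (2 ^ n * lowDegreeWeight f k) ^ (2 * m)
      = #A * (∑ x, f x * boolFourierInv g x) ^ (2 * m) := by
        rw [sum_mul_boolFourierInv, h_inner]
    _ ≤ (#A : ℝ) ^ (2 * m) * ∑ x, boolFourierInv g x ^ (2 * m) :=
        card_mul_pow_sum_mul_le hf _ (even_two_mul m) (by omega)
    _ ≤ (#A : ℝ) ^ (2 * m) * (2 ^ n * ((2 * m - 1) ^ k * lowDegreeWeight f k) ^ m) := by
        rw [← h_sq]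
        gcongr
        exact sum_boolFourierInv_pow_le_of_degree_le hm hg

lemma normalized_lowDegreeWeight_pow_le (hA : A.Nonempty)
    (hf : ∀ x, |f x| ≤ if x ∈ A then 1 else 0) (k : ℕ) {m : ℕ} (hm : 1 ≤ m) :
    (2 ^ (2 * n) / (#A : ℝ) ^ 2 * lowDegreeWeight f k) ^ m ≤
      2 ^ n / #A * ((2 * m - 1) ^ m) ^ k := by
  have : (0 : ℝ) < #A := by exact_mod_cast hA.card_pos
  have : (0 : ℝ) ≤ 2 * m - 1 := zero_le_one.trans (one_le_two_mul_sub_one hm)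
  have h_level := card_mul_lowDegreeWeight_pow_le hf k hm
  rcases (lowDegreeWeight_nonneg f k).eq_or_lt with hW | hW
  · rw [← hW, mul_zero, zero_pow (by omega)]
    positivity
  · generalize lowDegreeWeight f k = W at *
    refine le_of_mul_le_mul_right ?_ (show 0 < #A * (#A : ℝ) ^ (2 * m) * W ^ m by positivity)
    calc (2 ^ (2 * n) / (#A : ℝ) ^ 2 * W) ^ m * (#A * (#A : ℝ) ^ (2 * m) * W ^ m)
        = #A * (2 ^ n * W) ^ (2 * m) := by
          rw [pow_mul' 2 2 n, pow_mul, pow_mul, mul_pow, div_pow]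
          field_simp
          ring
      _ ≤ (#A : ℝ) ^ (2 * m) * (2 ^ n * ((2 * m - 1) ^ k * W) ^ m) := h_level
      _ = 2 ^ n / #A * ((2 * m - 1) ^ m) ^ k * (#A * (#A : ℝ) ^ (2 * m) * W ^ m) := by
          rw [mul_pow, pow_right_comm]
          field_simp

end Bounded

end Cube

section Exponent

lemma two_rpow_le_one_add {s : ℝ} (hs0 : 0 ≤ s) (hs1 : s ≤ 1) : (2 : ℝ) ^ s ≤ 1 + s := by
  have h := rpow_one_add_le_one_add_mul_self (s := 1) (by norm_num) hs0 hs1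
  rwa [one_add_one_eq_two, mul_one] at h

lemma two_rpow_div_four_mul_pow_le {t : ℝ} {m : ℕ} (hm : 1 ≤ m) (hmt : 2 * m - 1 ≤ t)
    (htm : t ≤ 2 * m + 1) :
    (2 : ℝ) ^ (t / 4) * (2 * m - 1) ^ m ≤ (√2 * t) ^ m := by
  set r : ℝ := 2 * m - 1 with hr
  have hr0 : 0 < r := zero_lt_one.trans_le (one_le_two_mul_sub_one hm)
  have h_sqrt : √2 ^ m = (2 : ℝ) ^ ((m : ℝ) / 2) := by
    rw [Real.sqrt_eq_rpow, ← Real.rpow_mul_natCast zero_le_two, one_div_mul_eq_div]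
  have h_slope : (t - r) / 2 ≤ m * (t / r - 1) := by
    rw [div_sub_one hr0.ne', mul_div_assoc', le_div_iff₀ hr0]
    nlinarith [hr]
  have h_excess : (2 : ℝ) ^ (t / 4 - m / 2) ≤ (t / r) ^ m :=
    calc (2 : ℝ) ^ (t / 4 - m / 2) ≤ 2 ^ ((t - r) / 2) := by
          gcongr
          exacts [one_le_two, by linarith]
      _ ≤ 1 + (t - r) / 2 := two_rpow_le_one_add (by linarith) (by linarith)
      _ ≤ 1 + m * (t / r - 1) := by gcongr
      _ ≤ (1 + (t / r - 1)) ^ m :=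
          one_add_mul_le_pow (by have : 0 ≤ t / r := div_nonneg (by linarith) hr0.le; linarith) m
      _ = (t / r) ^ m := by rw [add_sub_cancel]
  calc (2 : ℝ) ^ (t / 4) * r ^ m = 2 ^ ((m : ℝ) / 2) * 2 ^ (t / 4 - m / 2) * r ^ m := by
        rw [← Real.rpow_add zero_lt_two, add_sub_cancel]
    _ ≤ 2 ^ ((m : ℝ) / 2) * (t / r) ^ m * r ^ m := by gcongr
    _ = (√2 * t) ^ m := by
        rw [mul_assoc, ← mul_pow, div_mul_cancel₀ _ hr0.ne', mul_pow, h_sqrt]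

lemma exists_two_rpow_div_four_mul_pow_le {t : ℝ} (ht : 1 ≤ t) :
    ∃ m : ℕ, 1 ≤ m ∧ (2 : ℝ) ^ (t / 4) * (2 * m - 1) ^ m ≤ (√2 * t) ^ m := by
  have h_le := Nat.floor_le (show 0 ≤ (t + 1) / 2 by linarith)
  have h_lt := Nat.lt_floor_add_one ((t + 1) / 2)
  have hm : 1 ≤ ⌊(t + 1) / 2⌋₊ := Nat.le_floor (by push_cast; linarith)
  exact ⟨_, hm, two_rpow_div_four_mul_pow_le hm (by linarith) (by linarith)⟩

end Exponent

theorem kkl_level_sets_general {n : ℕ} (c : ℝ) (A : Finset (Fin n → ZMod 2))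
    (hA : (2 : ℝ) ^ ((n : ℝ) - c) ≤ (#A : ℝ)) (f : (Fin n → ZMod 2) → ℝ)
    (hf : ∀ x, |f x| ≤ if x ∈ A then 1 else 0) (k : ℕ) (hk1 : 1 ≤ k) (hk2 : (k : ℝ) ≤ 4 * c) :
    (2 : ℝ) ^ (2 * n) / (#A : ℝ) ^ 2 * lowDegreeWeight f k ≤ (4 * √2 * c / k) ^ k := by
  have hk : (0 : ℝ) < k := by exact_mod_cast hk1
  have h_card : (0 : ℝ) < #A := (by positivity : (0 : ℝ) < 2 ^ ((n : ℝ) - c)).trans_le hA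
  have hA_ne : A.Nonempty := card_pos.mp (by exact_mod_cast h_card)
  set t : ℝ := 4 * c / k with ht
  obtain ⟨m, hm, hmt⟩ := exists_two_rpow_div_four_mul_pow_le ((one_le_div hk).mpr hk2)
  have : (0 : ℝ) ≤ 2 * m - 1 := zero_le_one.trans (one_le_two_mul_sub_one hm)
  have h_density : (2 : ℝ) ^ n / #A ≤ ((2 : ℝ) ^ (t / 4)) ^ k := by
    rw [← Real.rpow_mul_natCast zero_le_two, show t / 4 * k = c by rw [ht]; field_simp,
      div_le_iff₀ h_card, ← div_le_iff₀' (by positivity), ← Real.rpow_natCast 2 n,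
      ← Real.rpow_sub zero_lt_two]
    exact hA
  have : 0 < c := by linarith
  refine le_of_pow_le_pow_left₀ (n := m) (by omega) (by positivity) ?_
  calc (2 ^ (2 * n) / (#A : ℝ) ^ 2 * lowDegreeWeight f k) ^ m
      ≤ 2 ^ n / #A * ((2 * m - 1) ^ m) ^ k := normalized_lowDegreeWeight_pow_le hA_ne hf k hm
    _ ≤ ((2 : ℝ) ^ (t / 4)) ^ k * ((2 * m - 1) ^ m) ^ k := by gcongr
    _ = ((2 : ℝ) ^ (t / 4) * (2 * m - 1) ^ m) ^ k := by rw [mul_pow]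
    _ ≤ ((√2 * t) ^ m) ^ k := by gcongr
    _ = ((4 * √2 * c / k) ^ k) ^ m := by
        rw [pow_right_comm, ht]
        ring

/-- KKL level-set consequence: for the characteristic function `f` of a set `A` with
`|A| ≥ 2^{n-c}`, `c ≥ 1`, and every `1 ≤ k ≤ 4c`,
`(2^{2n}/|A|²) ∑_{|v|=k} f̂(v)² ≤ (4√2·c/k)^k`. -/
theorem kkl_level_sets {n : ℕ} (c : ℝ) (hc : 1 ≤ c)
    (A : Finset (Fin n → ZMod 2)) (hAne : A.Nonempty)
    (hA : (2 : ℝ) ^ ((n : ℝ) - c) ≤ (A.card : ℝ))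
    (f : (Fin n → ZMod 2) → ℝ) (hf : ∀ x, f x = if x ∈ A then 1 else 0)
    (k : ℕ) (hk1 : 1 ≤ k) (hk2 : (k : ℝ) ≤ 4 * c) :
    (2 : ℝ) ^ (2 * n) / (A.card : ℝ) ^ 2 *
        ∑ v ∈ Finset.univ.filter
            (fun v : Fin n → ZMod 2 => (Finset.univ.filter fun i => v i ≠ 0).card = k),
          (boolFourier f v) ^ 2
      ≤ (4 * Real.sqrt 2 * c / (k : ℝ)) ^ k := by
  have h_abs : ∀ x, |f x| ≤ if x ∈ A then 1 else 0 := fun x => by rw [hf]; split_ifs <;> simp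
  exact (mul_le_mul_of_nonneg_left (sum_level_sq_boolFourier_le_lowDegreeWeight f k)
    (by positivity)).trans (kkl_level_sets_general c A hA f h_abs k hk1 hk2)
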